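/- The Tutte polynomials T_n^{(r)}(x,y) of the contracted complete graphs K_{n/r} satisfy, for all integers n > r ≥ 1, the recurrence T_n^{(r)}(x,y) = ∑_{s=1}^{n−r} binom(n−r, s) · [r]_y^s · y^{binom(s,2)} · T_{n−r}^{(s)}(x,y) + (x−1)·T_{n−r}^{(1)}(x,y), where [r]_y = 1 + y + ... + y^{r−1}. -/

import Mathlib

open Finset

/-- The simple graph on `V` underlying the spanning subgraph of the multigraph
`ε : E → Sym2 V` determined by the edge subset `F`. -/
def edgeGraph {V E : Type*} (ε : E → Sym2 V) (F : Finset E) : SimpleGraph V :=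
  SimpleGraph.fromRel (fun a b => ∃ e ∈ F, ε e = s(a, b))

/-- Number of connected components of the spanning subgraph `F`. -/
noncomputable def nComp {V E : Type*} (ε : E → Sym2 V) (F : Finset E) : ℕ :=
  Nat.card (edgeGraph ε F).ConnectedComponent

/-- The Tutte polynomial (evaluated at integers `x`, `y`) of the multigraph with vertex
set `V` and edges indexed by `E` with endpoints `ε`:
`T(x,y) = ∑_H (x-1)^(c(H)-1) (y-1)^(e(H)+c(H)-v(H))`, the sum running over all spanning
subgraphs `H` (edge subsets). -/
noncomputable def tutte {V E : Type*} [Fintype V] [Fintype E] [DecidableEq E]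
    (ε : E → Sym2 V) (x y : ℤ) : ℤ :=
  ∑ F : Finset E,
    (x - 1) ^ (nComp ε F - 1) * (y - 1) ^ (F.card + nComp ε F - Fintype.card V)

/-- Edge-endpoint map of the contracted complete graph `K_{n/r}` where `m = n - r`:
one hub vertex `none` (the contraction of the `r` vertices), `m` other vertices,
`r` parallel edges from the hub to each other vertex, and a complete graph on the
`m` other vertices. -/
def KCedge (r m : ℕ) :
    (Fin r × Fin m) ⊕ {p : Fin m × Fin m // p.1 < p.2} → Sym2 (Option (Fin m)) :=
  Sum.elim (fun ik => s((none : Option (Fin m)), some ik.2))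
    (fun p => s(some p.1.1, some p.1.2))

/-- `Tutte n r x y` is the Tutte polynomial `T_n^{(r)}(x,y)` of `K_{n/r}` (for `n ≥ r`). -/
noncomputable def TutteKC (n r : ℕ) (x y : ℤ) : ℤ :=
  tutte (KCedge r (n - r)) x y

/-!
`K_{n/r}` is the cone over `K_{n-r}` in which every vertex is joined to the apex by `r` parallel
edges. Sort its spanning subgraphs by the set `S` of vertices joined to the apex. Each vertex of `S`
has a nonempty set `U` of edges to the apex, and the choices of `U` contribute
`∑ (y - 1)^(|U| - 1) = [r]_y`; the remaining edges form a spanning subgraph of `K_{n-r}` with `S`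
contracted into the apex. After this contraction the edges inside `S` are `C(|S|, 2)` loops, each
contributing a factor `y`, and what is left is `K_{(n-r)/|S|}`. For `S = ∅` the apex is isolated,
which gives the factor `x - 1`.
-/

section Components

variable {V W E E' : Type*} {ε : E → Sym2 V} {F : Finset E}

theorem edgeGraph_adj {a b : V} :
    (edgeGraph ε F).Adj a b ↔ a ≠ b ∧ ∃ e ∈ F, ε e = s(a, b) := by
  simp [edgeGraph, Sym2.eq_swap (a := b)]

theorem edgeGraph_reachable_of_mem {e : E} (he : e ∈ F) {a b : V} (hab : ε e = s(a, b)) :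
    (edgeGraph ε F).Reachable a b := by
  by_cases h : a = b
  · rw [h]
  · exact (edgeGraph_adj.2 ⟨h, e, he, hab⟩).reachable

theorem eq_of_edgeGraph_reachable {α : Type*} {φ : V → α}
    (hφ : ∀ e ∈ F, ∀ a b, ε e = s(a, b) → φ a = φ b) {a b : V}
    (hab : (edgeGraph ε F).Reachable a b) : φ a = φ b := by
  obtain ⟨p⟩ := hab
  induction p with
  | nil => rfl
  | cons hadj _ ih =>
    obtain ⟨-, e, he, h⟩ := edgeGraph_adj.1 hadj
    exact (hφ e he _ _ h).trans ih

theorem edgeGraph_reachable_map (f : V → W) {a b : V} (hab : (edgeGraph ε F).Reachable a b) :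
    (edgeGraph (Sym2.map f ∘ ε) F).Reachable (f a) (f b) := by
  refine SimpleGraph.ConnectedComponent.exact (eq_of_edgeGraph_reachable
    (φ := fun v => (edgeGraph (Sym2.map f ∘ ε) F).connectedComponentMk (f v)) ?_ hab)
  intro e he a b h
  exact SimpleGraph.ConnectedComponent.sound (edgeGraph_reachable_of_mem he (by simp [h]))

theorem nComp_eq_card_of_surjective {α : Type*} {φ : V → α} (hsurj : φ.Surjective)
    (hedge : ∀ e ∈ F, ∀ a b, ε e = s(a, b) → φ a = φ b)
    (hreach : ∀ a b, φ a = φ b → (edgeGraph ε F).Reachable a b) : nComp ε F = Nat.card α := by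
  refine Nat.card_congr (Equiv.ofBijective
    (Quot.lift φ fun a b => eq_of_edgeGraph_reachable hedge) ⟨?_, ?_⟩)
  · rintro ⟨a⟩ ⟨b⟩ h
    exact Quot.sound (hreach a b h)
  · exact fun c => (hsurj c).imp' (Quot.mk _) fun _ => id

theorem nComp_pos [Finite V] [Nonempty V] (ε : E → Sym2 V) (F : Finset E) : 0 < nComp ε F :=
  Nat.card_pos

theorem nComp_map {f : V → W} (hf : f.Surjective)
    (hreach : ∀ a b, f a = f b → (edgeGraph ε F).Reachable a b) :
    nComp (Sym2.map f ∘ ε) F = nComp ε F := by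
  obtain ⟨g, hg⟩ := hf.hasRightInverse
  have hgf (a : V) : (edgeGraph ε F).Reachable (g (f a)) a := hreach _ _ (hg (f a))
  refine nComp_eq_card_of_surjective
    (φ := fun c => (edgeGraph ε F).connectedComponentMk (g c)) ?_ ?_ ?_
  · rintro ⟨a⟩
    exact ⟨f a, SimpleGraph.ConnectedComponent.sound (hgf a)⟩
  · intro e he c d hcd
    induction h : ε e with
    | h a b =>
      have hab := edgeGraph_reachable_of_mem he h
      apply SimpleGraph.ConnectedComponent.sound
      simp only [Function.comp_apply, h, Sym2.map_mk, Sym2.eq_iff] at hcd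
      rcases hcd with ⟨rfl, rfl⟩ | ⟨rfl, rfl⟩
      · exact (hgf a).trans (hab.trans (hgf b).symm)
      · exact (hgf b).trans (hab.symm.trans (hgf a).symm)
  · intro c d hcd
    simpa only [hg c, hg d] using
      edgeGraph_reachable_map f (SimpleGraph.ConnectedComponent.exact hcd)

theorem nComp_map_some [Finite V] (ε : E → Sym2 V) (F : Finset E) :
    nComp (Sym2.map some ∘ ε) F = nComp ε F + 1 := by
  refine (nComp_eq_card_of_surjective
    (φ := Option.map (edgeGraph ε F).connectedComponentMk) ?_ ?_ ?_).trans Finite.card_option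
  · rintro (_ | c)
    · exact ⟨none, rfl⟩
    · obtain ⟨a, rfl⟩ := c.exists_rep
      exact ⟨some a, rfl⟩
  · intro e he c d hcd
    induction h : ε e with
    | h a b =>
      have hab := SimpleGraph.ConnectedComponent.sound (edgeGraph_reachable_of_mem he h)
      simp only [Function.comp_apply, h, Sym2.map_mk, Sym2.eq_iff] at hcd
      rcases hcd with ⟨rfl, rfl⟩ | ⟨rfl, rfl⟩ <;> simp [hab]
  · rintro (_ | a) (_ | b) hab
    · rfl
    · simp at hab
    · simp at hab
    · exact edgeGraph_reachable_map some
        (SimpleGraph.ConnectedComponent.exact (Option.some_injective _ hab))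

theorem nComp_comp_embedding (ε : E' → Sym2 V) (h : E ↪ E') (F : Finset E) :
    nComp (ε ∘ h) F = nComp ε (F.map h) := by
  simp [nComp, edgeGraph]

theorem nComp_comp_inr {ε : E ⊕ E' → Sym2 V} {F : Finset (E ⊕ E')}
    (hloop : ∀ e ∈ F.toLeft, (ε (Sum.inl e)).IsDiag) :
    nComp (ε ∘ Sum.inr) F.toRight = nComp ε F := by
  have hgraph : edgeGraph (ε ∘ Sum.inr) F.toRight = edgeGraph ε F := by
    ext a b
    simp only [edgeGraph_adj, Sum.exists, mem_toRight, Function.comp_apply]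
    refine and_congr_right fun hab => (or_iff_right ?_).symm
    rintro ⟨e, he, h⟩
    exact hab (by simpa [h] using hloop e (mem_toLeft.2 he))
  rw [nComp, nComp, hgraph]

theorem nComp_le_nComp_insert_add_one [Finite V] [DecidableEq E] (ε : E → Sym2 V) (F : Finset E)
    (e : E) : nComp ε F ≤ nComp ε (insert e F) + 1 := by
  classical
  induction hab : ε e with
  | h a b =>
    let mk := (edgeGraph ε F).connectedComponentMk
    let merge : V → (edgeGraph ε F).ConnectedComponent :=
      fun v => if mk v = mk a then mk b else mk v
    have hmerge : ∀ e' ∈ insert e F, ∀ u v, ε e' = s(u, v) → merge u = merge v := by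
      intro e' he' u v huv
      rcases mem_insert.1 he' with rfl | he'
      · rcases Sym2.eq_iff.1 (hab.symm.trans huv) with ⟨rfl, rfl⟩ | ⟨rfl, rfl⟩ <;> simp [merge]
      · have : mk u = mk v :=
          SimpleGraph.ConnectedComponent.sound (edgeGraph_reachable_of_mem he' huv)
        simp only [merge, this]
    let lift : Option (edgeGraph ε (insert e F)).ConnectedComponent →
        (edgeGraph ε F).ConnectedComponent :=
      fun o => o.elim (mk a) (Quot.lift merge fun u v => eq_of_edgeGraph_reachable hmerge)
    have hlift : lift.Surjective := by
      rintro ⟨v⟩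
      by_cases hv : mk v = mk a
      · exact ⟨none, hv.symm⟩
      · exact ⟨some (Quot.mk _ v), if_neg hv⟩
    simpa only [nComp, Finite.card_option] using Nat.card_le_card_of_surjective lift hlift

theorem card_le_card_add_nComp [Fintype V] (ε : E → Sym2 V) (F : Finset E) :
    Fintype.card V ≤ #F + nComp ε F := by
  classical
  induction F using Finset.induction_on with
  | empty =>
    have hempty : nComp ε ∅ = Nat.card V :=
      nComp_eq_card_of_surjective Function.surjective_id (by simp) (by rintro a _ rfl; rfl)
    simp [hempty]
  | insert e F he ih =>
    have := nComp_le_nComp_insert_add_one ε F e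
    rw [card_insert_of_notMem he]
    omega

end Components

section TutteInvariance

variable {V W E E' : Type*} [Fintype V] [Fintype W] [Fintype E] [Fintype E']
  [DecidableEq E] [DecidableEq E']

theorem tutte_congr {ε : E → Sym2 V} {ε' : E' → Sym2 W} (f : V ≃ W) (h : E ≃ E')
    (hε : ∀ e, ε' (h e) = (ε e).map f) (x y : ℤ) : tutte ε x y = tutte ε' x y := by
  refine Fintype.sum_equiv h.finsetCongr _ _ fun F => ?_
  have hcomp : nComp ε' (h.finsetCongr F) = nComp ε F :=
    calc nComp ε' (h.finsetCongr F)
      _ = nComp (ε' ∘ h) F := (nComp_comp_embedding ε' h.toEmbedding F).symm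
      _ = nComp (Sym2.map f ∘ ε) F := by rw [show ε' ∘ h = Sym2.map f ∘ ε from funext hε]
      _ = nComp ε F := nComp_map f.surjective fun a b hab => by rw [f.injective hab]
  rw [hcomp, Fintype.card_congr f, Equiv.finsetCongr_apply, card_map]

theorem tutte_map_some [Nonempty V] (ε : E → Sym2 V) (x y : ℤ) :
    tutte (Sym2.map some ∘ ε) x y = (x - 1) * tutte ε x y := by
  rw [tutte, tutte, mul_sum]
  refine sum_congr rfl fun F _ => ?_
  have hpos := nComp_pos ε F
  rw [nComp_map_some, Fintype.card_option, Nat.add_sub_cancel, ← add_assoc,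
    Nat.add_sub_add_right, ← mul_assoc, ← pow_succ', Nat.sub_add_cancel hpos]

theorem tutte_eq_pow_card_mul_of_isDiag {ε : E ⊕ E' → Sym2 V}
    (hloop : ∀ e, (ε (Sum.inl e)).IsDiag) (x y : ℤ) :
    tutte ε x y = y ^ Fintype.card E * tutte (ε ∘ Sum.inr) x y := by
  have hpow : y ^ Fintype.card E = ∑ A : Finset E, (y - 1) ^ #A := by
    simpa using (Fintype.sum_pow_mul_eq_add_pow E (y - 1) 1).symm
  rw [hpow, tutte, tutte, sum_mul_sum, ← Fintype.sum_prod_type']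
  refine Fintype.sum_equiv sumEquiv.toEquiv _ _ fun F => ?_
  have hbound := card_le_card_add_nComp (ε ∘ Sum.inr) F.toRight
  change _ = (y - 1) ^ #F.toLeft * ((x - 1) ^ (nComp (ε ∘ Sum.inr) F.toRight - 1) *
    (y - 1) ^ (#F.toRight + nComp (ε ∘ Sum.inr) F.toRight - Fintype.card V))
  rw [← nComp_comp_inr fun e _ => hloop e, ← F.card_toLeft_add_card_toRight, add_assoc,
    Nat.add_sub_assoc hbound, pow_add]
  ring

end TutteInvariance

section ParallelClasses

variable {ι V R : Type*} [Fintype ι] [Fintype V] [DecidableEq V] [CommRing R]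

theorem sum_nonempty_pow_card_sub_one (z : R) :
    ∑ U : Finset ι with U.Nonempty, z ^ (#U - 1) = ∑ i ∈ range (Fintype.card ι), (z + 1) ^ i := by
  classical
  let weight (k : ℕ) : R := if k = 0 then 0 else z ^ (k - 1)
  calc ∑ U : Finset ι with U.Nonempty, z ^ (#U - 1)
    _ = ∑ U ∈ (univ : Finset ι).powerset, weight #U := by
      simp only [sum_filter, powerset_univ, weight, card_eq_zero, nonempty_iff_ne_empty, ite_not]
    _ = ∑ i ∈ range (Fintype.card ι), ((Fintype.card ι).choose (i + 1) : R) * z ^ i := by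
      rw [sum_powerset_apply_card, card_univ, sum_range_succ']
      simp [weight]
    _ = ∑ i ∈ range (Fintype.card ι), (z + 1) ^ i := by
      simpa [Polynomial.eval_comp, Polynomial.eval_finsetSum] using (congrArg (Polynomial.eval z)
        (Polynomial.geom_sum_X_comp_X_add_one_eq_sum (R := R) (Fintype.card ι))).symm

/-- A set of pairs `(i, v)` as the family, indexed by `v`, of its fibers over the second
coordinate. -/
def finsetProdEquivFibers (ι V : Type*) [Fintype ι] [DecidableEq ι] [Fintype V] [DecidableEq V] :
    Finset (ι × V) ≃ (V → Finset ι) where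
  toFun A v := {i | (i, v) ∈ A}
  invFun g := {p | p.1 ∈ g p.2}
  left_inv A := by ext; simp
  right_inv g := by ext; simp

theorem mem_image_snd_iff_fiber_nonempty [DecidableEq ι] {A : Finset (ι × V)} {v : V} :
    v ∈ A.image Prod.snd ↔ (finsetProdEquivFibers ι V A v).Nonempty := by
  simp [finsetProdEquivFibers, Finset.Nonempty]

theorem card_sub_card_image_snd [DecidableEq ι] (A : Finset (ι × V)) :
    #A - #(A.image Prod.snd) = ∑ v, (#(finsetProdEquivFibers ι V A v) - 1) := by
  have hcard : #A = ∑ v, #(finsetProdEquivFibers ι V A v) := by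
    simp only [finsetProdEquivFibers, Equiv.coe_fn_mk, card_filter]
    rw [← Fintype.sum_prod_type_right', ← card_filter, filter_univ_mem]
  have himage : #(A.image Prod.snd) =
      ∑ v, if (finsetProdEquivFibers ι V A v).Nonempty then 1 else 0 := by
    simp only [← card_filter, ← mem_image_snd_iff_fiber_nonempty, filter_univ_mem]
  rw [hcard, himage, ← sum_tsub_distrib]
  · refine sum_congr rfl fun v _ => ?_
    split_ifs with h
    · rfl
    · simp [not_nonempty_iff_eq_empty.1 h]
  · intro v _
    split_ifs with h
    · exact h.card_pos
    · exact Nat.zero_le _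

theorem sum_image_snd_eq_pow_card_sub (S : Finset V) (z : R) :
    ∑ A : Finset (ι × V) with A.image Prod.snd = S, z ^ (#A - #S)
      = (∑ i ∈ range (Fintype.card ι), (z + 1) ^ i) ^ #S := by
  classical
  let fibers (v : V) : Finset (Finset ι) := if v ∈ S then univ.filter Finset.Nonempty else {∅}
  have hfibers (A : Finset (ι × V)) :
      A.image Prod.snd = S ↔ finsetProdEquivFibers ι V A ∈ Fintype.piFinset fibers := by
    simp only [Finset.ext_iff (s₂ := S), mem_image_snd_iff_fiber_nonempty, Fintype.mem_piFinset]
    refine forall_congr' fun v => ?_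
    by_cases hv : v ∈ S <;> simp [fibers, hv, not_nonempty_iff_eq_empty]
  calc ∑ A : Finset (ι × V) with A.image Prod.snd = S, z ^ (#A - #S)
    _ = ∑ g ∈ Fintype.piFinset fibers, ∏ v, z ^ (#(g v) - 1) := by
      refine sum_equiv (finsetProdEquivFibers ι V) (by simp [hfibers]) fun A hA => ?_
      rw [← (mem_filter.1 hA).2, card_sub_card_image_snd, prod_pow_eq_pow_sum]
    _ = ∏ v, ∑ U ∈ fibers v, z ^ (#U - 1) := (prod_univ_sum fibers fun _ U => z ^ (#U - 1)).symm
    _ = ∏ v, if v ∈ S then ∑ i ∈ range (Fintype.card ι), (z + 1) ^ i else 1 := by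
      refine prod_congr rfl fun v _ => ?_
      by_cases hv : v ∈ S
      · simp only [fibers, hv, if_true, sum_nonempty_pow_card_sub_one]
      · simp [fibers, hv]
    _ = (∑ i ∈ range (Fintype.card ι), (z + 1) ^ i) ^ #S := by simp [prod_ite_mem]

end ParallelClasses

section Cone

variable {ι V E : Type*}

/-- Endpoints of the cone over the multigraph `ε`: a new vertex, the apex `none`, is joined to every
vertex by a class of parallel edges indexed by `ι`. -/
def coneEdge (ι : Type*) {V E : Type*} (ε : E → Sym2 V) : (ι × V) ⊕ E → Sym2 (Option V) :=
  Sum.elim (fun p => s(none, some p.2)) (Sym2.map some ∘ ε)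

variable [DecidableEq V]

/-- The vertex map of the contraction of `S` to a single vertex `none`. For `S = ∅` that vertex is
not hit, so that contracting amounts to adding an isolated vertex. -/
def contractSet (S : Finset V) (v : V) : Option {v // v ∉ S} :=
  if h : v ∈ S then none else some ⟨v, h⟩

theorem contractSet_of_mem {S : Finset V} {v : V} (hv : v ∈ S) : contractSet S v = none :=
  dif_pos hv

theorem contractSet_of_notMem {S : Finset V} {v : V} (hv : v ∉ S) :
    contractSet S v = some ⟨v, hv⟩ :=
  dif_neg hv

theorem contractSet_singleton_bijective (v : V) : (contractSet {v}).Bijective := by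
  constructor
  · intro a b hab
    by_cases ha : a = v <;> by_cases hb : b = v <;> simp_all [contractSet]
  · rintro (_ | ⟨u, hu⟩)
    · exact ⟨v, contractSet_of_mem (mem_singleton_self v)⟩
    · exact ⟨u, contractSet_of_notMem hu⟩

theorem coneEdge_reachable_none_some {ε : E → Sym2 V} {F : Finset ((ι × V) ⊕ E)} {v : V}
    (hv : v ∈ F.toLeft.image Prod.snd) :
    (edgeGraph (coneEdge ι ε) F).Reachable none (some v) := by
  obtain ⟨⟨i, v⟩, hi, rfl⟩ := mem_image.1 hv
  exact edgeGraph_reachable_of_mem (mem_toLeft.1 hi) rfl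

theorem coneEdge_reachable_of_bind_contractSet_eq {ε : E → Sym2 V} {F : Finset ((ι × V) ⊕ E)}
    {a b : Option V} (hab : a.bind (contractSet (F.toLeft.image Prod.snd))
      = b.bind (contractSet (F.toLeft.image Prod.snd))) :
    (edgeGraph (coneEdge ι ε) F).Reachable a b := by
  set S := F.toLeft.image Prod.snd
  rcases a with _ | a <;> rcases b with _ | b
  · rfl
  · by_cases hb : b ∈ S
    · exact coneEdge_reachable_none_some hb
    · simp [contractSet, hb] at hab
  · by_cases ha : a ∈ S
    · exact (coneEdge_reachable_none_some ha).symm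
    · simp [contractSet, ha] at hab
  · by_cases ha : a ∈ S <;> by_cases hb : b ∈ S
    · exact (coneEdge_reachable_none_some ha).symm.trans (coneEdge_reachable_none_some hb)
    · simp [contractSet, ha, hb] at hab
    · simp [contractSet, ha, hb] at hab
    · have : a = b := by simpa [contractSet, ha, hb] using hab
      rw [this]

theorem nComp_coneEdge (ε : E → Sym2 V) (F : Finset ((ι × V) ⊕ E)) :
    nComp (coneEdge ι ε) F
      = nComp (Sym2.map (contractSet (F.toLeft.image Prod.snd)) ∘ ε) F.toRight := by
  set S := F.toLeft.image Prod.snd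
  let contract (o : Option V) : Option {v // v ∉ S} := o.bind (contractSet S)
  have hsurj : contract.Surjective := by
    rintro (_ | ⟨v, hv⟩)
    · exact ⟨none, rfl⟩
    · exact ⟨some v, contractSet_of_notMem hv⟩
  have hloop : ∀ p ∈ F.toLeft, ((Sym2.map contract ∘ coneEdge ι ε) (Sum.inl p)).IsDiag :=
    fun p hp => (contractSet_of_mem (mem_image_of_mem Prod.snd hp)).symm
  have hbase : (Sym2.map contract ∘ coneEdge ι ε) ∘ Sum.inr = Sym2.map (contractSet S) ∘ ε :=
    funext fun e => Sym2.map_map (ε e)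
  rw [← nComp_map hsurj fun a b => coneEdge_reachable_of_bind_contractSet_eq,
    ← nComp_comp_inr hloop, hbase]

variable [Fintype ι] [DecidableEq ι] [Fintype V] [Fintype E] [DecidableEq E]

theorem card_option_notMem_add_card (S : Finset V) :
    Fintype.card (Option {v // v ∉ S}) + #S = Fintype.card (Option V) := by
  have hle := S.card_le_univ
  rw [Fintype.card_option, Fintype.card_option, Fintype.card_subtype_compl, Fintype.card_coe]
  omega

theorem tutte_coneEdge (ε : E → Sym2 V) (x y : ℤ) :
    tutte (coneEdge ι ε) x y = ∑ S : Finset V,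
      (∑ i ∈ range (Fintype.card ι), y ^ i) ^ #S * tutte (Sym2.map (contractSet S) ∘ ε) x y := by
  let contracted (A : Finset (ι × V)) := Sym2.map (contractSet (A.image Prod.snd)) ∘ ε
  have hsplit : tutte (coneEdge ι ε) x y = ∑ A : Finset (ι × V),
      (y - 1) ^ (#A - #(A.image Prod.snd)) * tutte (contracted A) x y := by
    simp only [tutte, mul_sum]
    rw [← Fintype.sum_prod_type']
    refine Fintype.sum_equiv sumEquiv.toEquiv _ _ fun F => ?_
    have hcomp : nComp (coneEdge ι ε) F = nComp (contracted F.toLeft) F.toRight :=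
      nComp_coneEdge ε F
    have hnullity : #F + nComp (contracted F.toLeft) F.toRight - Fintype.card (Option V)
        = #F.toLeft - #(F.toLeft.image Prod.snd)
          + (#F.toRight + nComp (contracted F.toLeft) F.toRight
            - Fintype.card (Option {v // v ∉ F.toLeft.image Prod.snd})) := by
      have hbound := card_le_card_add_nComp (contracted F.toLeft) F.toRight
      have himage : #(F.toLeft.image Prod.snd) ≤ #F.toLeft := card_image_le
      have hvertices := card_option_notMem_add_card (F.toLeft.image Prod.snd)
      have hedges := F.card_toLeft_add_card_toRight
      omega
    rw [hcomp, hnullity, pow_add, mul_left_comm]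
    rfl
  rw [hsplit, ← sum_fiberwise univ (fun A : Finset (ι × V) => A.image Prod.snd)]
  refine sum_congr rfl fun S _ => ?_
  have hweight := sum_image_snd_eq_pow_card_sub (ι := ι) S (y - 1)
  rw [sub_add_cancel] at hweight
  rw [← hweight, sum_mul]
  refine sum_congr rfl fun A hA => ?_
  obtain rfl := (mem_filter.1 hA).2
  rfl

end Cone

section Complete

/-- Endpoints of the complete graph on `V`, whose edges are the non-diagonal unordered pairs. -/
def completeEdge (V : Type*) : {e : Sym2 V // ¬e.IsDiag} → Sym2 V :=
  Subtype.val

variable {ι V W : Type*}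

/-- The edges of the complete graph on `V ⊕ W`, sorted into those inside `V`, those across, and
those inside `W`. -/
def completeSumEdge (V W : Type*) :
    {e : Sym2 V // ¬e.IsDiag} ⊕ ((V × W) ⊕ {e : Sym2 W // ¬e.IsDiag}) →
      {e : Sym2 (V ⊕ W) // ¬e.IsDiag} :=
  Sum.elim (fun e => ⟨e.1.map Sum.inl, (Sym2.isDiag_map Sum.inl_injective).not.2 e.2⟩)
    (Sum.elim (fun p => ⟨s(Sum.inl p.1, Sum.inr p.2), Sum.inl_ne_inr⟩)
      fun e => ⟨e.1.map Sum.inr, (Sym2.isDiag_map Sum.inr_injective).not.2 e.2⟩)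

theorem completeSumEdge_bijective : (completeSumEdge V W).Bijective := by
  constructor
  · rintro (⟨⟨a, b⟩, _⟩ | ⟨a, b⟩ | ⟨⟨a, b⟩, _⟩) (⟨⟨c, d⟩, _⟩ | ⟨c, d⟩ | ⟨⟨c, d⟩, _⟩) h <;>
      simp_all [completeSumEdge, Subtype.ext_iff]
  · rintro ⟨⟨a | a, b | b⟩, h⟩
    · exact ⟨Sum.inl ⟨s(a, b), fun hab => h (congrArg Sum.inl hab)⟩, rfl⟩
    · exact ⟨Sum.inr (Sum.inl (a, b)), rfl⟩
    · exact ⟨Sum.inr (Sum.inl (b, a)), Subtype.ext Sym2.eq_swap⟩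
    · exact ⟨Sum.inr (Sum.inr ⟨s(a, b), fun hab => h (congrArg Sum.inr hab)⟩), rfl⟩

/-- The bijection between the edges of two complete graphs induced by one of their vertices. -/
def completeEdgeEquiv (σ : V ≃ W) : {e : Sym2 V // ¬e.IsDiag} ≃ {e : Sym2 W // ¬e.IsDiag} where
  toFun e := ⟨e.1.map σ, (Sym2.isDiag_map σ.injective).not.2 e.2⟩
  invFun e := ⟨e.1.map σ.symm, (Sym2.isDiag_map σ.symm.injective).not.2 e.2⟩
  left_inv e := by simp [Sym2.map_map]
  right_inv e := by simp [Sym2.map_map]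

/-- The pairs `a < b` of a linear order as non-diagonal unordered pairs. -/
noncomputable def ltPairEquiv (V : Type*) [LinearOrder V] :
    {p : V × V // p.1 < p.2} ≃ {e : Sym2 V // ¬e.IsDiag} := by
  refine Equiv.ofBijective (fun p => ⟨s(p.1.1, p.1.2), p.2.ne⟩) ⟨?_, ?_⟩
  · rintro ⟨⟨a, b⟩, hab⟩ ⟨⟨c, d⟩, hcd⟩ h
    rcases Sym2.eq_iff.1 (congrArg Subtype.val h) with ⟨rfl, rfl⟩ | ⟨rfl, rfl⟩
    · rfl
    · exact absurd hab hcd.asymm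
  · rintro ⟨⟨a, b⟩, h⟩
    rcases lt_or_gt_of_ne (show a ≠ b from h) with hab | hab
    · exact ⟨⟨(a, b), hab⟩, rfl⟩
    · exact ⟨⟨(b, a), hab⟩, Subtype.ext Sym2.eq_swap⟩

variable [Fintype ι] [DecidableEq ι] [Fintype V] [DecidableEq V] [Fintype W] [DecidableEq W]

theorem tutte_map_contractSet_completeEdge (S : Finset V) (x y : ℤ) :
    tutte (Sym2.map (contractSet S) ∘ completeEdge V) x y
      = y ^ (#S).choose 2 * tutte (coneEdge S (completeEdge {v // v ∉ S})) x y := by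
  let σ : {v // v ∈ S} ⊕ {v // v ∉ S} ≃ V := Equiv.sumCompl (· ∈ S)
  let edges := (Equiv.ofBijective _ completeSumEdge_bijective).trans (completeEdgeEquiv σ)
  let sorted := Sym2.map (contractSet S) ∘ completeEdge V ∘ edges
  have hloop : ∀ e, (sorted (Sum.inl e)).IsDiag := by
    rintro ⟨⟨a, b⟩, _⟩
    exact (contractSet_of_mem a.2).trans (contractSet_of_mem b.2).symm
  have hcone : sorted ∘ Sum.inr = coneEdge S (completeEdge {v // v ∉ S}) := by
    funext e
    rcases e with ⟨a, b⟩ | ⟨⟨a, b⟩, _⟩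
    · exact congrArg₂ (fun u v => s(u, v)) (contractSet_of_mem a.2) (contractSet_of_notMem b.2)
    · exact congrArg₂ (fun u v => s(u, v)) (contractSet_of_notMem a.2) (contractSet_of_notMem b.2)
  rw [← tutte_congr (Equiv.refl _) edges (ε := sorted) (by simp [sorted]),
    tutte_eq_pow_card_mul_of_isDiag hloop, hcone, Sym2.card_subtype_not_diag, Fintype.card_coe]

theorem tutteKC_eq_tutte_coneEdge {n r : ℕ} (hι : Fintype.card ι = r)
    (hV : Fintype.card V = n - r) (x y : ℤ) :
    TutteKC n r x y = tutte (coneEdge ι (completeEdge V)) x y := by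
  let f : Fin (n - r) ≃ V := (Fintype.equivFinOfCardEq hV).symm
  let g : Fin r ≃ ι := (Fintype.equivFinOfCardEq hι).symm
  refine tutte_congr f.optionCongr
    ((g.prodCongr f).sumCongr ((ltPairEquiv _).trans (completeEdgeEquiv f))) ?_ x y
  rintro (p | e) <;> rfl

theorem tutteKC_one_right [Nonempty V] {n : ℕ} (hV : Fintype.card V = n) (x y : ℤ) :
    TutteKC n 1 x y = tutte (completeEdge V) x y := by
  obtain ⟨v⟩ := ‹Nonempty V›
  calc TutteKC n 1 x y
    _ = tutte (coneEdge ({v} : Finset V) (completeEdge {u // u ∉ ({v} : Finset V)})) x y :=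
      tutteKC_eq_tutte_coneEdge (by rw [Fintype.card_coe, card_singleton])
        (by rw [Fintype.card_subtype_compl, Fintype.card_coe, hV, card_singleton]) x y
    _ = tutte (Sym2.map (contractSet {v}) ∘ completeEdge V) x y := by
      simp [tutte_map_contractSet_completeEdge]
    _ = tutte (completeEdge V) x y :=
      (tutte_congr (ε := completeEdge V) (ε' := Sym2.map (contractSet {v}) ∘ completeEdge V)
        (Equiv.ofBijective _ (contractSet_singleton_bijective v)) (Equiv.refl _)
        (fun _ => rfl) x y).symm

theorem tutteKC_zero_right {n : ℕ} (hn : 0 < n) (x y : ℤ) :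
    TutteKC n 0 x y = (x - 1) * TutteKC n 1 x y := by
  have : Nonempty (Fin n) := ⟨⟨0, hn⟩⟩
  have hloop : ∀ p, (coneEdge (Fin 0) (completeEdge (Fin n)) (Sum.inl p)).IsDiag :=
    fun p => p.1.elim0
  calc TutteKC n 0 x y
    _ = tutte (coneEdge (Fin 0) (completeEdge (Fin n))) x y :=
      tutteKC_eq_tutte_coneEdge (Fintype.card_fin 0) (Fintype.card_fin n) x y
    _ = tutte (Sym2.map some ∘ completeEdge (Fin n)) x y := by
      rw [tutte_eq_pow_card_mul_of_isDiag hloop, Fintype.card_eq_zero, pow_zero, one_mul,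
        coneEdge, Sum.elim_comp_inr]
    _ = (x - 1) * TutteKC n 1 x y := by
      rw [tutte_map_some, tutteKC_one_right (Fintype.card_fin n)]

theorem tutteKC_eq_sum_range {n r : ℕ} (x y : ℤ) :
    TutteKC n r x y = ∑ s ∈ range (n - r + 1), ((n - r).choose s : ℤ) *
      (∑ i ∈ range r, y ^ i) ^ s * y ^ s.choose 2 * TutteKC (n - r) s x y := by
  have hcontract (S : Finset (Fin (n - r))) :
      tutte (Sym2.map (contractSet S) ∘ completeEdge (Fin (n - r))) x y
        = y ^ (#S).choose 2 * TutteKC (n - r) #S x y := by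
    rw [tutte_map_contractSet_completeEdge, ← tutteKC_eq_tutte_coneEdge (Fintype.card_coe S)]
    rw [Fintype.card_subtype_compl, Fintype.card_coe, Fintype.card_fin]
  rw [tutteKC_eq_tutte_coneEdge (Fintype.card_fin r) (Fintype.card_fin (n - r)), tutte_coneEdge]
  simp only [hcontract, Fintype.card_fin]
  rw [← powerset_univ, sum_powerset_apply_card fun s =>
    (∑ i ∈ range r, y ^ i) ^ s * (y ^ s.choose 2 * TutteKC (n - r) s x y), card_univ,
    Fintype.card_fin]
  simp only [nsmul_eq_mul, mul_assoc]

end Complete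

/-- **Theorem 1.** For all integers `n > r ≥ 1`,
`T_n^{(r)}(x,y) = ∑_{s=1}^{n-r} C(n-r,s) [r]_y^s y^(C(s,2)) T_{n-r}^{(s)}(x,y)
  + (x-1) T_{n-r}^{(1)}(x,y)`, where `[r]_y = 1 + y + ⋯ + y^{r-1}`. -/
theorem tutte_contracted_complete_recurrence (n r : ℕ) (hr : 1 ≤ r) (hnr : r < n)
    (x y : ℤ) :
    TutteKC n r x y
      = (∑ s ∈ Icc 1 (n - r), ((n - r).choose s : ℤ) * (∑ i ∈ range r, y ^ i) ^ s *
          y ^ s.choose 2 * TutteKC (n - r) s x y)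
        + (x - 1) * TutteKC (n - r) 1 x y := by
  rw [tutteKC_eq_sum_range, sum_range_eq_add_Ico _ (Nat.add_one_pos _), add_comm,
    Ico_add_one_right_eq_Icc]
  simp [tutteKC_zero_right (Nat.sub_pos_of_lt hnr)]
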